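/- Let k ≥ 2 be an integer, let ε > 0, and let H be an ordered graph whose underlying graph is a cycle of length 2k and whose interval chromatic number is 2. Then there is a constant C such that for every positive integer n, ex_<(n, H) ≤ C · n^{3/2 + ε}. -/

import Mathlib

/-- An ordered graph `G` on `Fin m` (with the natural vertex order) contains the ordered graph
`H` on `Fin h` as an ordered subgraph if there is an order-preserving injective graph
homomorphism from `H` to `G`. -/
def ordContains {m h : ℕ} (G : SimpleGraph (Fin m)) (H : SimpleGraph (Fin h)) : Prop :=
  ∃ f : Fin h → Fin m, StrictMono f ∧ ∀ u v, H.Adj u v → G.Adj (f u) (f v)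

/-- The ordered extremal number `ex_<(n, H)`. -/
noncomputable def ordEx {h : ℕ} (n : ℕ) (H : SimpleGraph (Fin h)) : ℕ :=
  sSup {e : ℕ | ∃ G : SimpleGraph (Fin n), ¬ ordContains G H ∧ G.edgeSet.ncard = e}

/-!
Split the edges of an `H`-free `G` into dyadic layers, according to the top binary digit in which
the endpoints differ. In a layer, read as a `0`-`1` matrix, every column of the support of a row
exceeds all rows that meet that support, so vertices of `H` left of the split point may be sent to
rows and the others to columns without further care for the order between the two.

Regard the rows as leaves of a `K`-ary tree of depth `L`, where `n ≤ K ^ L` and `K` is large. Among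
the common rows of two columns all but `2 ^ L * K ^ m` branch upwards at more than `m` levels of the
tree. Hence, if a layer has much more than `n ^ (3 / 2)` edges, Cauchy–Schwarz gives a row `s` such
that for most pairs of columns in its support, `s` branches at a positive proportion of the levels
inside the common rows of the pair. Ramsey's argument and the pigeonhole principle then produce a
large set `B` of levels at which `s` branches for all pairs of columns from a large set `C`. Every
vertex left of the split point has at most two neighbours, so it can be placed at a common row of
their images, and leaving `s` at levels of `B` that increase along `H` makes these rows increase.

The losses are a power of `2 ^ L`, which is `n ^ O(ε)` once `log K` is large in terms of `1 / ε`,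
and `K ^ m` with `m` a small multiple of `L`, which is again `n ^ O(ε)`.
-/

open Finset

section Digits

/-- The numbers `s < t` first differ, reading base-`K` digits from the most significant one, in
the digit of index `l`. Indices count from the least significant digit, so that `t / K ^ l`
consists of the digits of `t` of index at least `l`. -/
def TopDigitLT (K l s t : ℕ) : Prop :=
  t / K ^ (l + 1) = s / K ^ (l + 1) ∧ s / K ^ l < t / K ^ l

instance (K l s t : ℕ) : Decidable (TopDigitLT K l s t) :=
  inferInstanceAs (Decidable (_ ∧ _))

variable {K l l' j r s t t' c c' : ℕ}

lemma topDigitLT_zero : TopDigitLT K 0 s t ↔ t / K = s / K ∧ s < t := by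
  simp [TopDigitLT]

lemma topDigitLT_succ : TopDigitLT K (l + 1) s t ↔ TopDigitLT K l (s / K) (t / K) := by
  simp only [TopDigitLT, Nat.div_div_eq_div_mul, pow_succ']

lemma TopDigitLT.lt_of_lt (h : TopDigitLT K l s t) (h' : TopDigitLT K l' s t') (hl : l < l') :
    t < t' := by
  obtain ⟨d, rfl⟩ := Nat.exists_eq_add_of_le hl
  have agree_above : t / K ^ (l + 1 + d) = s / K ^ (l + 1 + d) := by
    rw [pow_add, ← Nat.div_div_eq_div_mul, ← Nat.div_div_eq_div_mul, h.1]
  exact Nat.lt_of_div_lt_div (agree_above.trans_lt h'.2)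

lemma exists_topDigitLT (hst : s < t) {J : ℕ} (hJ : s / K ^ J = t / K ^ J) :
    ∃ j < J, TopDigitLT K j s t := by
  induction J with
  | zero => simp only [pow_zero, Nat.div_one] at hJ; omega
  | succ J ih =>
    by_cases heq : s / K ^ J = t / K ^ J
    · obtain ⟨j, hj, h⟩ := ih heq
      exact ⟨j, by omega, h⟩
    · exact ⟨J, by omega, hJ.symm, (Nat.div_le_div_right hst.le).lt_of_ne heq⟩

/-- In base `2` the digit of index `j` is `0` on the left and `1` on the right of `TopDigitLT`. -/
lemma TopDigitLT.row_lt_col (hsc : TopDigitLT 2 j s c) (hsc' : TopDigitLT 2 j s c')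
    (hrc' : TopDigitLT 2 j r c') : r < c := by
  simp only [TopDigitLT, pow_succ, ← Nat.div_div_eq_div_mul] at hsc hsc' hrc'
  exact Nat.lt_of_div_lt_div (c := 2 ^ j) (by omega)

end Digits

section BranchLevels

/-- The levels at which `s` branches upwards inside `S`, where numbers with `L` base-`K` digits are
regarded as the leaves of a `K`-ary tree of depth `L`. -/
def branchLevels (K L : ℕ) (S : Finset ℕ) (s : ℕ) : Finset (Fin L) :=
  {l | ∃ t ∈ S, TopDigitLT K l s t}

variable {K L s : ℕ} {S : Finset ℕ}

lemma mem_branchLevels {l : Fin L} :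
    l ∈ branchLevels K L S s ↔ ∃ t ∈ S, TopDigitLT K l s t := by
  simp [branchLevels]

lemma card_branchLevels_succ :
    #(branchLevels K (L + 1) S s) = #(branchLevels K L (S.image (· / K)) (s / K)) +
      if ∃ t ∈ S, t / K = s / K ∧ s < t then 1 else 0 := by
  simp only [branchLevels, Fin.card_filter_univ_succ', Fin.val_zero, topDigitLT_zero, Fin.val_succ,
    topDigitLT_succ, exists_mem_image]
  exact add_comm _ _

lemma card_filter_div_eq_le (hK : 0 < K) (S : Finset ℕ) (u : ℕ) : #{s ∈ S | s / K = u} ≤ K := by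
  have hsub : {s ∈ S | s / K = u} ⊆ Ico (K * u) (K * u + K) := by
    intro s hs
    have hs := (mem_filter.1 hs).2
    rw [mem_Ico, ← hs]
    exact ⟨Nat.mul_div_le s K, Nat.lt_mul_div_succ s hK⟩
  simpa using card_le_card hsub

/-- Only the largest element of the fibre has weight `1`; the at most `K` others weigh `1 / K`. -/
lemma sum_fiber_weight_le (hK : 0 < K) (S : Finset ℕ) (u : ℕ) :
    ∑ s ∈ S with s / K = u, (K : ℝ)⁻¹ ^ (if ∃ t ∈ S, t / K = s / K ∧ s < t then 1 else 0) ≤ 2 := by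
  set F := {s ∈ S | s / K = u} with hF
  obtain hempty | hne := F.eq_empty_or_nonempty
  · simp [hempty]
  have hKr : (0 : ℝ) < K := by exact_mod_cast hK
  have hM := F.max'_mem hne
  set M := F.max' hne
  have weight_le : ∀ s ∈ F, (K : ℝ)⁻¹ ^ (if ∃ t ∈ S, t / K = s / K ∧ s < t then 1 else 0) ≤
      (K : ℝ)⁻¹ + if s = M then 1 else 0 := by
    intro s hs
    by_cases hsM : s = M
    · rw [if_pos hsM]
      have := pow_le_one₀ (n := if ∃ t ∈ S, t / K = s / K ∧ s < t then 1 else 0)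
        (inv_nonneg.2 hKr.le) (Nat.cast_inv_le_one K)
      have := inv_pos.2 hKr
      linarith
    · have hlt : s < M := (F.le_max' s hs).lt_of_ne hsM
      rw [hF, mem_filter] at hs hM
      rw [if_pos ⟨M, hM.1, hM.2.trans hs.2.symm, hlt⟩, if_neg hsM, pow_one, add_zero]
  have hcard : (#F : ℝ) * (K : ℝ)⁻¹ ≤ 1 := by
    rw [← div_eq_mul_inv, div_le_one hKr]
    exact_mod_cast card_filter_div_eq_le hK S u
  calc _ ≤ ∑ s ∈ F, ((K : ℝ)⁻¹ + if s = M then 1 else 0) := sum_le_sum weight_le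
    _ = #F * (K : ℝ)⁻¹ + 1 := by
        rw [sum_add_distrib, sum_const, sum_ite_eq' F M, if_pos hM, nsmul_eq_mul]
    _ ≤ 2 := by linarith

lemma sum_inv_pow_card_branchLevels_le (hK : 0 < K) (hS : ∀ s ∈ S, s < K ^ L) :
    ∑ s ∈ S, (K : ℝ)⁻¹ ^ #(branchLevels K L S s) ≤ 2 ^ L := by
  induction L generalizing S with
  | zero =>
    have hS0 : #S ≤ 1 := card_le_one.2 fun a ha b hb => by
      rw [Nat.lt_one_iff.1 (hS a ha), Nat.lt_one_iff.1 (hS b hb)]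
    simpa [branchLevels] using hS0
  | succ L ih =>
    set w : ℕ → ℝ := fun u => (K : ℝ)⁻¹ ^ #(branchLevels K L (S.image (· / K)) u)
    set v : ℕ → ℝ := fun s => (K : ℝ)⁻¹ ^ (if ∃ t ∈ S, t / K = s / K ∧ s < t then 1 else 0)
    have ih_image : ∑ u ∈ S.image (· / K), w u ≤ 2 ^ L := ih <| forall_mem_image.2 fun s hs =>
      (Nat.div_lt_iff_lt_mul hK).2 (by simpa only [pow_succ] using hS s hs)
    calc ∑ s ∈ S, (K : ℝ)⁻¹ ^ #(branchLevels K (L + 1) S s)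
        = ∑ u ∈ S.image (· / K), ∑ s ∈ S with s / K = u, w (s / K) * v s := by
          rw [sum_fiberwise_of_maps_to fun s hs => mem_image_of_mem (· / K) hs]
          simp only [card_branchLevels_succ, pow_add, w, v]
      _ = ∑ u ∈ S.image (· / K), w u * ∑ s ∈ S with s / K = u, v s := by
          refine sum_congr rfl fun u _ => ?_
          rw [mul_sum]
          exact sum_congr rfl fun s hs => by rw [(mem_filter.1 hs).2]
      _ ≤ ∑ u ∈ S.image (· / K), w u * 2 :=
          sum_le_sum fun u _ => mul_le_mul_of_nonneg_left (sum_fiber_weight_le hK S u)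
            (by positivity)
      _ ≤ 2 ^ (L + 1) := by
          rw [← sum_mul, pow_succ]
          exact mul_le_mul_of_nonneg_right ih_image zero_le_two

lemma card_few_branchLevels_le (hK : 0 < K) (hS : ∀ s ∈ S, s < K ^ L) (m : ℕ) :
    #{s ∈ S | #(branchLevels K L S s) ≤ m} ≤ 2 ^ L * K ^ m := by
  have hweight : #{s ∈ S | #(branchLevels K L S s) ≤ m} * (K : ℝ)⁻¹ ^ m ≤ 2 ^ L := by
    calc #{s ∈ S | #(branchLevels K L S s) ≤ m} * (K : ℝ)⁻¹ ^ m
        = ∑ s ∈ S with #(branchLevels K L S s) ≤ m, (K : ℝ)⁻¹ ^ m := by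
          rw [sum_const, nsmul_eq_mul]
      _ ≤ ∑ s ∈ S with #(branchLevels K L S s) ≤ m, (K : ℝ)⁻¹ ^ #(branchLevels K L S s) :=
          sum_le_sum fun s hs => pow_le_pow_of_le_one (by positivity) (Nat.cast_inv_le_one K)
            (mem_filter.1 hs).2
      _ ≤ ∑ s ∈ S, (K : ℝ)⁻¹ ^ #(branchLevels K L S s) :=
          sum_le_sum_of_subset_of_nonneg (filter_subset _ _) fun _ _ _ => by positivity
      _ ≤ 2 ^ L := sum_inv_pow_card_branchLevels_le hK hS
  rw [inv_pow, ← div_eq_mul_inv, div_le_iff₀ (pow_pos (Nat.cast_pos.2 hK) m)] at hweight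
  exact_mod_cast hweight

end BranchLevels

section Chains

variable {α β Γ ι : Type*}

lemma exists_large_color_class [Fintype Γ] [DecidableEq Γ] [Nonempty Γ] (f : α → Γ)
    (A : Finset α) : ∃ g, #A ≤ Fintype.card Γ * #{v ∈ A | f v = g} := by
  obtain ⟨g, hg⟩ := Finite.exists_max fun g => #{v ∈ A | f v = g}
  refine ⟨g, ?_⟩
  rw [mul_comm]
  exact card_le_mul_card_image_of_maps_to (fun _ _ => mem_univ _) _ fun b _ => hg b

/-- The sets `S i` witness the usual Ramsey argument: pick `c i ∈ S i` and shrink `S i` to the most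
frequent colour seen from `c i`. -/
lemma exists_homogeneous_chain [Fintype Γ] (χ : α → α → Γ)
    {A : Finset α} (hA : A.Nonempty) :
    ∃ (S : ℕ → Finset α) (c : ℕ → α) (a : ℕ → Γ), S 0 = A ∧ Antitone S ∧ (∀ i, c i ∈ S i) ∧
      (∀ i, ∀ v ∈ S (i + 1), χ (c i) v = a i) ∧ ∀ i, #A ≤ Fintype.card Γ ^ i * #(S i) := by
  classical
  have exists_step (B : {B : Finset α // B.Nonempty}) :
      ∃ v ∈ B.1, ∃ (g : Γ) (B' : {B : Finset α // B.Nonempty}), B'.1 ⊆ B.1 ∧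
        (∀ w ∈ B'.1, χ v w = g) ∧ #B.1 ≤ Fintype.card Γ * #B'.1 := by
    obtain ⟨B, hB⟩ := B
    obtain ⟨v, hv⟩ := id hB
    have : Nonempty Γ := ⟨χ v v⟩
    obtain ⟨g, hg⟩ := exists_large_color_class (χ v) B
    have hne : {w ∈ B | χ v w = g}.Nonempty :=
      card_pos.1 (Nat.pos_of_mul_pos_left (hB.card_pos.trans_le hg))
    exact ⟨v, hv, g, ⟨_, hne⟩, filter_subset _ _, fun w hw => (mem_filter.1 hw).2, hg⟩
  choose pick pick_mem color next next_subset color_eq card_le using exists_step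
  let S : ℕ → {B : Finset α // B.Nonempty} := fun i => next^[i] ⟨A, hA⟩
  have S_succ (i : ℕ) : S (i + 1) = next (S i) := Function.iterate_succ_apply' _ _ _
  refine ⟨fun i => (S i).1, fun i => pick (S i), fun i => color (S i), rfl,
    antitone_nat_of_succ_le fun i => ?_, fun i => pick_mem _, fun i => ?_, fun i => ?_⟩
  · rw [S_succ]
    exact next_subset _
  · simp only [S_succ]
    exact color_eq _
  · induction i with
    | zero => simp [S]
    | succ i ih =>
      calc #A ≤ Fintype.card Γ ^ i * #(S i).1 := ih
        _ ≤ Fintype.card Γ ^ i * (Fintype.card Γ * #(S (i + 1)).1) := by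
            rw [S_succ]
            exact Nat.mul_le_mul_left _ (card_le _)
        _ = Fintype.card Γ ^ (i + 1) * #(S (i + 1)).1 := by rw [pow_succ, mul_assoc]

lemma card_lt_two_mul_card_filter_mul_lt {U : Finset α} {f : α → ℕ} {Y : ℕ}
    (h : 2 * (Y * ∑ v ∈ U, f v) < #U ^ 2) : #U < 2 * #{v ∈ U | Y * f v < #U} := by
  have hsplit := card_filter_add_card_filter_not (s := U) (fun v => Y * f v < #U)
  have markov : #{v ∈ U | ¬ Y * f v < #U} * #U ≤ Y * ∑ v ∈ U, f v := by
    rw [mul_sum, ← smul_eq_mul]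
    calc _ ≤ ∑ v ∈ U with ¬ Y * f v < #U, Y * f v :=
          card_nsmul_le_sum _ _ _ fun v hv => not_lt.1 (mem_filter.1 hv).2
      _ ≤ ∑ v ∈ U, Y * f v := sum_le_sum_of_subset (filter_subset _ _)
  have : 2 * #{v ∈ U | ¬ Y * f v < #U} < #U := by nlinarith
  omega

lemma exists_homogeneous_chain_avoiding [Fintype Γ] (χ : α → α → Γ)
    (P : Γ → Prop) [DecidablePred P] {U : Finset α} {T : ℕ}
    (h : 4 * Fintype.card Γ ^ T * #{p ∈ U ×ˢ U | P (χ p.1 p.2)} < #U ^ 2) :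
    ∃ (c : ℕ → α) (a : ℕ → Γ), (∀ i, c i ∈ U) ∧ (∀ i j, i < j → χ (c i) (c j) = a i) ∧
      ∀ i < T, ¬ P (a i) := by
  have sum_bad : #{p ∈ U ×ˢ U | P (χ p.1 p.2)} = ∑ c ∈ U, #{v ∈ U | P (χ c v)} := by
    simp only [card_filter, sum_product]
  set U₀ := {c ∈ U | 2 * Fintype.card Γ ^ T * #{v ∈ U | P (χ c v)} < #U}
  have card_U₀ : #U < 2 * #U₀ := card_lt_two_mul_card_filter_mul_lt (by rw [← sum_bad]; linarith)
  have hU₀ne : U₀.Nonempty := card_pos.1 (by omega)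
  obtain ⟨S, c, a, hS0, hanti, hcS, hSa, hcard⟩ := exists_homogeneous_chain χ hU₀ne
  have hS_sub (i : ℕ) : S i ⊆ U₀ := hS0 ▸ hanti i.zero_le
  refine ⟨c, a, fun i => (mem_filter.1 (hS_sub i (hcS i))).1,
    fun i j hij => hSa i _ (hanti hij (hcS j)), fun i hi hP => ?_⟩
  have : Nonempty Γ := ⟨a 0⟩
  have hS_bad : S (i + 1) ⊆ {v ∈ U | P (χ (c i) v)} := fun v hv =>
    mem_filter.2 ⟨(mem_filter.1 (hS_sub _ hv)).1, by rwa [hSa i v hv]⟩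
  have hU₀_le : #U₀ ≤ Fintype.card Γ ^ T * #{v ∈ U | P (χ (c i) v)} :=
    (hcard (i + 1)).trans <|
      Nat.mul_le_mul (Nat.pow_le_pow_right Fintype.card_pos hi) (card_le_card hS_bad)
  have hc_few := (mem_filter.1 (hS_sub i (hcS i))).2
  rw [mul_assoc] at hc_few
  omega

lemma card_le_two_mul_card_popular [Fintype ι] [Fintype β] [DecidableEq β] {p t : ℕ}
    (hp : 0 < p) (ht : 0 < t) {a : ι → Finset β} (ha : ∀ i, Fintype.card β ≤ t * #(a i))
    (hι : 2 * p * t ≤ Fintype.card ι) :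
    Fintype.card β ≤ 2 * t * #{l : β | p ≤ #{i | l ∈ a i}} := by
  have double_count : ∑ l : β, #{i | l ∈ a i} = ∑ i, #(a i) := by
    simpa [bipartiteAbove, bipartiteBelow] using
      sum_card_bipartiteAbove_eq_sum_card_bipartiteBelow (s := univ) (t := univ) fun l i => l ∈ a i
  have lower : Fintype.card ι * Fintype.card β ≤ t * ∑ i, #(a i) := by
    rw [mul_sum, ← smul_eq_mul]
    exact card_nsmul_le_sum _ _ _ fun i _ => ha i
  have upper : ∑ l : β, #{i | l ∈ a i} ≤
      Fintype.card ι * #{l : β | p ≤ #{i | l ∈ a i}} + p * Fintype.card β := by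
    calc _ ≤ ∑ l : β, ((if p ≤ #{i | l ∈ a i} then Fintype.card ι else 0) + p) := by
          refine sum_le_sum fun l _ => ?_
          have := card_le_univ {i | l ∈ a i}
          split_ifs <;> omega
      _ = _ := by
          rw [sum_add_distrib, ← sum_filter, sum_const, sum_const, smul_eq_mul, smul_eq_mul,
            card_univ, mul_comm, mul_comm p]
  have half_le : t * (p * Fintype.card β) * 2 ≤ Fintype.card ι * Fintype.card β := by
    calc _ = 2 * p * t * Fintype.card β := by ring
      _ ≤ _ := Nat.mul_le_mul_right _ hι
  have hιpos : 0 < Fintype.card ι := lt_of_lt_of_le (by positivity) hι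
  rw [double_count] at upper
  refine le_of_mul_le_mul_left ?_ hιpos
  have := lower.trans (Nat.mul_le_mul_left t upper)
  linarith

lemma exists_common_subset [Fintype ι] [Fintype β] {p t : ℕ}
    (hp : 0 < p) (ht : 0 < t) {a : ι → Finset β} (ha : ∀ i, Fintype.card β ≤ t * #(a i))
    (hι : 2 * p * t ≤ Fintype.card ι) (hβ : 2 * t * (p * 2 ^ Fintype.card ι) ≤ Fintype.card β) :
    ∃ (D : Finset ι) (B : Finset β), #D = p ∧ #B = p ∧ ∀ i ∈ D, B ⊆ a i := by
  classical
  have many_popular : p * 2 ^ Fintype.card ι ≤ #{l : β | p ≤ #{i | l ∈ a i}} :=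
    Nat.le_of_mul_le_mul_left (hβ.trans (card_le_two_mul_card_popular hp ht ha hι)) (by positivity)
  obtain ⟨D₀, -, hfiber⟩ := exists_le_card_fiber_of_mul_le_card_of_maps_to
    (f := fun l => ({i | l ∈ a i} : Finset ι)) (t := univ) (n := p)
    (fun _ _ => mem_univ _) univ_nonempty
    (by rwa [card_univ, Fintype.card_finset, mul_comm])
  obtain ⟨B, hB, hBcard⟩ := exists_subset_card_eq hfiber
  have hD₀ : p ≤ #D₀ := by
    obtain ⟨l, hl⟩ := card_pos.1 (hp.trans_eq hBcard.symm)
    have hl := mem_filter.1 (hB hl)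
    exact hl.2 ▸ (mem_filter.1 hl.1).2
  obtain ⟨D, hD, hDcard⟩ := exists_subset_card_eq hD₀
  refine ⟨D, B, hDcard, hBcard, fun i hi l hl => ?_⟩
  have hi' : i ∈ ({i | l ∈ a i} : Finset ι) := (mem_filter.1 (hB hl)).2.symm ▸ hD hi
  exact (mem_filter.1 hi').2

end Chains

section BranchingCliques

variable {n : ℕ} {α : Type*} (E : Fin n → α → Prop) [DecidableRel E]

/-- The rows of the `0`-`1` matrix `E` which have a one in both of the columns `c` and `c'`. -/
def commonRows (c c' : α) : Finset ℕ :=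
  ({r | E r c ∧ E r c'} : Finset (Fin n)).map Fin.valEmbedding

/-- The columns in which row `s` of the `0`-`1` matrix `E` has a one. -/
def rowSupport [Fintype α] (s : Fin n) : Finset α :=
  {c | E s c}

/-- The levels at which row `s` branches upwards inside the common rows of two distinct columns.
It is empty on the diagonal, so that columns with many levels in common are distinct. -/
def pairLevels [DecidableEq α] (K L : ℕ) (s : Fin n) (c c' : α) : Finset (Fin L) :=
  if c = c' then ∅ else branchLevels K L (commonRows E c c') s

variable {E} {K L : ℕ}

lemma commonRows_comm (c c' : α) : commonRows E c c' = commonRows E c' c := by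
  simp only [commonRows, and_comm]

lemma mem_commonRows {c c' : α} {t : ℕ} :
    t ∈ commonRows E c c' ↔ ∃ r : Fin n, (E r c ∧ E r c') ∧ (r : ℕ) = t := by
  simp [commonRows]

lemma card_few_pairLevels_le [DecidableEq α] (hK : 0 < K) (hn : n ≤ K ^ L) (m : ℕ) (c c' : α) :
    #{s | (E s c ∧ E s c') ∧ #(pairLevels E K L s c c') ≤ m} ≤
      2 ^ L * K ^ m + if c = c' then n else 0 := by
  by_cases h : c = c'
  · rw [if_pos h]
    exact (card_le_univ _).trans (by rw [Fintype.card_fin]; exact Nat.le_add_left _ _)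
  · have lt_pow : ∀ t ∈ commonRows E c c', t < K ^ L := by
      intro t ht
      obtain ⟨r, -, rfl⟩ := mem_commonRows.1 ht
      exact r.isLt.trans_le hn
    have few_levels := card_few_branchLevels_le hK lt_pow m
    rw [commonRows, filter_map, card_map, filter_filter] at few_levels
    simpa [pairLevels, h, commonRows] using few_levels

variable [Fintype α]

lemma sum_card_few_pairLevels_le [DecidableEq α] (hK : 0 < K) (hn : n ≤ K ^ L) (m : ℕ) :
    ∑ s, #{p ∈ rowSupport E s ×ˢ rowSupport E s | #(pairLevels E K L s p.1 p.2) ≤ m} ≤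
      Fintype.card α ^ 2 * (2 ^ L * K ^ m) + Fintype.card α * n := by
  calc _ = ∑ s, #{p : α × α | (E s p.1 ∧ E s p.2) ∧ #(pairLevels E K L s p.1 p.2) ≤ m} := by
        refine sum_congr rfl fun s _ => congrArg card ?_
        ext p
        simp [rowSupport]
    _ = ∑ p : α × α, #{s | (E s p.1 ∧ E s p.2) ∧ #(pairLevels E K L s p.1 p.2) ≤ m} :=
        sum_card_bipartiteAbove_eq_sum_card_bipartiteBelow _
    _ ≤ ∑ p : α × α, (2 ^ L * K ^ m + if p.1 = p.2 then n else 0) :=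
        sum_le_sum fun p _ => card_few_pairLevels_le hK hn m p.1 p.2
    _ = _ := by simp [sum_add_distrib, Fintype.sum_prod_type, sq]

lemma exists_row_few_pairLevels [DecidableEq α] (hK : 0 < K) (hn : n ≤ K ^ L) (m X : ℕ)
    (hE : X * (n * (Fintype.card α ^ 2 * (2 ^ L * K ^ m) + Fintype.card α * n)) <
      #{e : Fin n × α | E e.1 e.2} ^ 2) :
    ∃ s, X * #{p ∈ rowSupport E s ×ˢ rowSupport E s | #(pairLevels E K L s p.1 p.2) ≤ m} <
      #(rowSupport E s) ^ 2 := by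
  by_contra! hcon
  refine hE.not_ge ?_
  calc #{e : Fin n × α | E e.1 e.2} ^ 2
      = (∑ s, #(rowSupport E s)) ^ 2 := by
        simp only [rowSupport, card_filter, Fintype.sum_prod_type]
    _ ≤ n * ∑ s, #(rowSupport E s) ^ 2 := by
        simpa using sq_sum_le_card_mul_sum_sq (s := univ) (f := fun s => #(rowSupport E s))
    _ ≤ n * ∑ s,
          X * #{p ∈ rowSupport E s ×ˢ rowSupport E s | #(pairLevels E K L s p.1 p.2) ≤ m} :=
        Nat.mul_le_mul_left _ (sum_le_sum fun s _ => hcon s)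
    _ ≤ n * (X * (Fintype.card α ^ 2 * (2 ^ L * K ^ m) + Fintype.card α * n)) := by
        rw [← mul_sum]
        gcongr
        exact sum_card_few_pairLevels_le hK hn m
    _ = _ := by ring

lemma exists_branching_clique {p t m : ℕ} (hK : 0 < K) (hn : n ≤ K ^ L) (hp : 0 < p) (ht : 0 < t)
    (hL : 2 * t * (p * 2 ^ (2 * p * t)) ≤ L) (hm : L ≤ t * (m + 1))
    (hE : 4 * (2 ^ L) ^ (2 * p * t) *
        (n * (Fintype.card α ^ 2 * (2 ^ L * K ^ m) + Fintype.card α * n)) <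
      #{e : Fin n × α | E e.1 e.2} ^ 2) :
    ∃ (s : Fin n) (C : Finset α) (B : Finset (Fin L)), #C = p ∧ #B = p ∧ (∀ c ∈ C, E s c) ∧
      ∀ c ∈ C, ∀ c' ∈ C, c ≠ c' → B ⊆ branchLevels K L (commonRows E c c') s := by
  classical
  obtain ⟨s, hs⟩ := exists_row_few_pairLevels hK hn m _ hE
  obtain ⟨c, a, hcU, hca, hmany⟩ := exists_homogeneous_chain_avoiding (T := 2 * p * t)
    (pairLevels E K L s) (fun A => #A ≤ m) (by simpa using hs)
  obtain ⟨D, B, hD, hB, hDB⟩ := exists_common_subset (ι := Fin (2 * p * t)) (t := t)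
    (a := fun i => a i) hp ht
    (fun i => by
      rw [Fintype.card_fin]
      exact hm.trans (Nat.mul_le_mul_left t (not_le.1 (hmany i i.isLt))))
    (Fintype.card_fin _).ge (by simpa using hL)
  have pair_of_lt : ∀ i ∈ D, ∀ j, i < j → c i ≠ c j ∧
      B ⊆ branchLevels K L (commonRows E (c i) (c j)) s := by
    intro i hi j hij
    have hBsub : B ⊆ pairLevels E K L s (c i) (c j) := hca i j hij ▸ hDB i hi
    have hne : c i ≠ c j := fun heq => by
      rw [pairLevels, if_pos heq, subset_empty] at hBsub
      simp [hBsub, hp.ne] at hB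
    exact ⟨hne, by rwa [pairLevels, if_neg hne] at hBsub⟩
  have hinj : Set.InjOn (fun i : Fin (2 * p * t) => c i) D := by
    intro i hi j hj hij
    by_contra hne
    rcases lt_or_gt_of_ne hne with h | h
    · exact (pair_of_lt i hi j h).1 hij
    · exact (pair_of_lt j hj i h).1 hij.symm
  refine ⟨s, D.image fun i : Fin (2 * p * t) => c i, B, (card_image_of_injOn hinj).trans hD, hB,
    ?_, ?_⟩
  · exact forall_mem_image.2 fun i _ => (mem_filter.1 (hcU i)).2
  · refine forall_mem_image.2 fun i hi => forall_mem_image.2 fun j hj hne => ?_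
    rcases lt_trichotomy i j with h | rfl | h
    · exact (pair_of_lt i hi j h).2
    · exact absurd rfl hne
    · exact commonRows_comm (E := E) _ _ ▸ (pair_of_lt j hj i h).2

end BranchingCliques

section Embedding

lemma exists_row_leaving {n K L : ℕ} {α : Type*} {E : Fin n → α → Prop} [DecidableRel E] {s : ℕ}
    {l : Fin L} {N C : Finset α} (hNC : N ⊆ C) (hN : #N ≤ 2) (hC : 2 ≤ #C)
    (hl : ∀ c ∈ C, ∀ c' ∈ C, c ≠ c' → l ∈ branchLevels K L (commonRows E c c') s) :
    ∃ r : Fin n, (∀ c ∈ N, E r c) ∧ (∃ c ∈ C, E r c) ∧ TopDigitLT K l s r := by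
  classical
  obtain ⟨P, hNP, hPC, hP⟩ := exists_subsuperset_card_eq hNC hN hC
  obtain ⟨c, c', hne, rfl⟩ := card_eq_two.1 hP
  have hcC : c ∈ C := hPC (mem_insert_self _ _)
  have hcC' : c' ∈ C := hPC (mem_insert_of_mem (mem_singleton_self _))
  obtain ⟨_, ht, hst⟩ := mem_branchLevels.1 (hl c hcC c' hcC' hne)
  obtain ⟨r, ⟨hrc, hrc'⟩, rfl⟩ := mem_commonRows.1 ht
  refine ⟨r, fun d hd => ?_, ⟨c, hcC, hrc⟩, hst⟩
  rcases mem_insert.1 (hNP hd) with rfl | hd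
  · exact hrc
  · rwa [mem_singleton.1 hd]

/-- Vertices on the right of `x` go to columns in increasing order. A vertex `u` on the left goes to
a row that leaves `s` at the `u`-th level of `B`; leaving at a higher level means a larger row. -/
lemma ordContains_of_branching_clique {n h x K L : ℕ} {G : SimpleGraph (Fin n)}
    {H : SimpleGraph (Fin h)} [DecidableRel H.Adj] {E : Fin n → Fin n → Prop} [DecidableRel E]
    (hEG : ∀ r c, E r c → G.Adj r c) (hE : ∀ s r c c', E s c → E s c' → E r c' → r < c)
    (hbip : ∀ u v : Fin h, H.Adj u v → u < v → (u : ℕ) < x ∧ x ≤ (v : ℕ))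
    (hdeg : ∀ u : Fin h, (u : ℕ) < x → H.degree u ≤ 2)
    {s : Fin n} {C : Finset (Fin n)} {B : Finset (Fin L)} (hC2 : 2 ≤ #C) (hC : h ≤ #C)
    (hB : h ≤ #B) (hCE : ∀ c ∈ C, E s c)
    (hCB : ∀ c ∈ C, ∀ c' ∈ C, c ≠ c' → B ⊆ branchLevels K L (commonRows E c c') s) :
    ordContains G H := by
  let col := C.orderEmbOfCardLe hC
  let lvl := B.orderEmbOfCardLe hB
  have hcol (u : Fin h) : col u ∈ C := C.orderEmbOfCardLe_mem hC u
  have exists_row (u : Fin h) (hu : (u : ℕ) < x) : ∃ r : Fin n, (∀ v, H.Adj u v → E r (col v)) ∧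
      (∀ c ∈ C, r < c) ∧ TopDigitLT K (lvl u) s r := by
    obtain ⟨r, hrN, ⟨c', hc', hrc'⟩, hr⟩ := exists_row_leaving
      (N := (H.neighborFinset u).map col.toEmbedding) (C := C) (l := lvl u)
      (fun c hc => by obtain ⟨v, -, rfl⟩ := mem_map.1 hc; exact hcol v)
      (by simpa using hdeg u hu) hC2
      (fun c hc c' hc' hne => hCB c hc c' hc' hne (B.orderEmbOfCardLe_mem hB u))
    exact ⟨r, fun v hv => hrN _ (mem_map_of_mem _ ((H.mem_neighborFinset u v).2 hv)),
      fun c hc => hE s r c c' (hCE c hc) (hCE c' hc') hrc', hr⟩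
  choose row row_adj row_lt_col row_leaves using exists_row
  let f : Fin h → Fin n := fun u => if hu : (u : ℕ) < x then row u hu else col u
  have f_left {u : Fin h} (hu : (u : ℕ) < x) : f u = row u hu := dif_pos hu
  have f_right {u : Fin h} (hu : ¬ (u : ℕ) < x) : f u = col u := dif_neg hu
  have f_adj {u v : Fin h} (huv : H.Adj u v) (hlt : u < v) : G.Adj (f u) (f v) := by
    obtain ⟨hu, hv⟩ := hbip u v huv hlt
    rw [f_left hu, f_right hv.not_gt]
    exact hEG _ _ (row_adj u hu v huv)
  refine ⟨f, fun u v huv => ?_, fun u v huv => ?_⟩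
  · by_cases hu : (u : ℕ) < x <;> by_cases hv : (v : ℕ) < x
    · rw [f_left hu, f_left hv]
      exact (row_leaves u hu).lt_of_lt (row_leaves v hv) (lvl.strictMono huv)
    · rw [f_left hu, f_right hv]
      exact row_lt_col u hu _ (hcol v)
    · exact absurd (Fin.lt_def.1 huv) (by omega)
    · rw [f_right hu, f_right hv]
      exact col.strictMono huv
  · rcases lt_or_gt_of_ne huv.ne with hlt | hlt
    · exact f_adj huv hlt
    · exact (f_adj huv.symm hlt).symm

end Embedding

section EdgeCount

variable {n h x : ℕ}

/-- The edges of `G` whose endpoints first differ in the binary digit of index `j`, as a relation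
from the smaller to the larger endpoint. -/
def dyadicLayer (G : SimpleGraph (Fin n)) (j : ℕ) (r c : Fin n) : Prop :=
  G.Adj r c ∧ TopDigitLT 2 j r c

instance (G : SimpleGraph (Fin n)) [DecidableRel G.Adj] (j : ℕ) :
    DecidableRel (dyadicLayer G j) :=
  fun r c => inferInstanceAs (Decidable (G.Adj r c ∧ TopDigitLT 2 j r c))

variable {G : SimpleGraph (Fin n)} {H : SimpleGraph (Fin h)} [DecidableRel H.Adj]

lemma ncard_edgeSet_le_sum_dyadicLayer [DecidableRel G.Adj] {J : ℕ} (hJ : n ≤ 2 ^ J) :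
    G.edgeSet.ncard ≤ ∑ j ∈ range J, #{e : Fin n × Fin n | dyadicLayer G j e.1 e.2} := by
  let layer (j : ℕ) : Finset (Fin n × Fin n) := {e | dyadicLayer G j e.1 e.2}
  let covered : Finset (Sym2 (Fin n)) := (range J).biUnion fun j =>
    (layer j).image fun e => s(e.1, e.2)
  have mem_covered {u v : Fin n} (huv : G.Adj u v) (hlt : u < v) : s(u, v) ∈ covered := by
    obtain ⟨j, hj, hdigit⟩ := exists_topDigitLT (K := 2) (J := J) (Fin.lt_def.1 hlt) (by
      rw [Nat.div_eq_of_lt (u.isLt.trans_le hJ), Nat.div_eq_of_lt (v.isLt.trans_le hJ)])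
    exact mem_biUnion.2 ⟨j, mem_range.2 hj, mem_image.2
      ⟨(u, v), mem_filter.2 ⟨mem_univ _, huv, hdigit⟩, rfl⟩⟩
  have hsub : G.edgeSet ⊆ covered := by
    intro e he
    induction e using Sym2.ind with
    | _ u v =>
      rcases lt_or_gt_of_ne (G.ne_of_adj he) with hlt | hlt
      · exact mem_covered he hlt
      · exact Sym2.eq_swap ▸ mem_covered (G.mem_edgeSet.1 he).symm hlt
  calc G.edgeSet.ncard ≤ #covered := by
        simpa using Set.ncard_le_ncard hsub (finite_toSet _)
    _ ≤ ∑ j ∈ range J, #((layer j).image fun e => s(e.1, e.2)) := card_biUnion_le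
    _ ≤ ∑ j ∈ range J, #(layer j) := sum_le_sum fun _ _ => card_image_le

lemma sq_card_dyadicLayer_le [DecidableRel G.Adj] (hG : ¬ ordContains G H)
    (hbip : ∀ u v : Fin h, H.Adj u v → u < v → (u : ℕ) < x ∧ x ≤ (v : ℕ))
    (hdeg : ∀ u : Fin h, (u : ℕ) < x → H.degree u ≤ 2) {K L t T m : ℕ} (hK : 0 < K)
    (hn : n ≤ K ^ L) (ht : 0 < t) (hT : T = 2 * (h + 2) * t)
    (hL : 2 * t * ((h + 2) * 2 ^ T) ≤ L) (hm : L ≤ t * (m + 1)) (j : ℕ) :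
    #{e : Fin n × Fin n | dyadicLayer G j e.1 e.2} ^ 2 ≤
      8 * 2 ^ (L * (T + 1)) * K ^ m * n ^ 3 := by
  subst hT
  have few_edges : #{e : Fin n × Fin n | dyadicLayer G j e.1 e.2} ^ 2 ≤
      4 * (2 ^ L) ^ (2 * (h + 2) * t) * (n * (n ^ 2 * (2 ^ L * K ^ m) + n * n)) := by
    by_contra! hmany
    obtain ⟨s, C, B, hC, hB, hCE, hCB⟩ := exists_branching_clique (E := dyadicLayer G j)
      (p := h + 2) hK hn (by omega) ht hL hm (by simpa only [Fintype.card_fin] using hmany)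
    exact hG <| ordContains_of_branching_clique (E := dyadicLayer G j) (fun r c hrc => hrc.1)
      (fun s r c c' hsc hsc' hrc' => hsc.2.row_lt_col hsc'.2 hrc'.2) hbip hdeg
      (by omega) (by omega) (by omega) hCE hCB
  calc _ ≤ 4 * (2 ^ L) ^ (2 * (h + 2) * t) * (n * (n ^ 2 * (2 ^ L * K ^ m) + n * n)) := few_edges
    _ ≤ 4 * (2 ^ L) ^ (2 * (h + 2) * t) *
          (n * (n ^ 2 * (2 ^ L * K ^ m) + n * n * (2 ^ L * K ^ m))) := by
        exact Nat.mul_le_mul_left _ (Nat.mul_le_mul_left _ (Nat.add_le_add_left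
          (Nat.le_mul_of_pos_right _ (by positivity)) _))
    _ = 8 * 2 ^ (L * (2 * (h + 2) * t + 1)) * K ^ m * n ^ 3 := by
        rw [mul_add L, pow_add, pow_mul, mul_one]
        ring

lemma sq_ncard_edgeSet_le (hG : ¬ ordContains G H)
    (hbip : ∀ u v : Fin h, H.Adj u v → u < v → (u : ℕ) < x ∧ x ≤ (v : ℕ))
    (hdeg : ∀ u : Fin h, (u : ℕ) < x → H.degree u ≤ 2) {κ L t T : ℕ}
    (hn : n ≤ (2 ^ κ) ^ L) (ht : 0 < t) (hT : T = 2 * (h + 2) * t)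
    (hL : 2 * t * ((h + 2) * 2 ^ T) ≤ L) :
    G.edgeSet.ncard ^ 2 ≤ 8 * κ ^ 2 * 2 ^ (L * (T + 3) + κ * (L / t)) * n ^ 3 := by
  classical
  set Z := 8 * 2 ^ (L * (T + 1)) * (2 ^ κ) ^ (L / t) * n ^ 3
  have layer_le (j : ℕ) : #{e : Fin n × Fin n | dyadicLayer G j e.1 e.2} ≤ Z.sqrt :=
    Nat.le_sqrt'.2 <| sq_card_dyadicLayer_le hG hbip hdeg (by positivity) hn ht hT hL
      (Nat.lt_mul_div_succ L ht).le j
  have edges_le : G.edgeSet.ncard ≤ κ * L * Z.sqrt := by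
    calc _ ≤ _ := ncard_edgeSet_le_sum_dyadicLayer (by rwa [pow_mul])
      _ ≤ #(range (κ * L)) * Z.sqrt := sum_le_card_nsmul _ _ _ fun j _ => layer_le j
      _ = κ * L * Z.sqrt := by rw [card_range]
  calc G.edgeSet.ncard ^ 2 ≤ (κ * L * Z.sqrt) ^ 2 := Nat.pow_le_pow_left edges_le 2
    _ = κ ^ 2 * L ^ 2 * Z.sqrt ^ 2 := by ring
    _ ≤ κ ^ 2 * (2 ^ L) ^ 2 * Z := by
        gcongr
        · exact Nat.lt_two_pow_self.le
        · exact Nat.sqrt_le' Z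
    _ = 8 * κ ^ 2 * 2 ^ (L * (T + 3) + κ * (L / t)) * n ^ 3 := by
        rw [pow_add, pow_mul 2 κ, mul_add L, pow_add]
        ring

end EdgeCount

section Asymptotics

lemma exists_pow_mem_Icc {K n : ℕ} (hK : 1 < K) (hn : 0 < n) (L₀ : ℕ) :
    ∃ L, L₀ ≤ L ∧ n ≤ K ^ L ∧ K ^ L ≤ K ^ (L₀ + 1) * n := by
  refine ⟨L₀ + 1 + Nat.log K n, by omega, ?_, ?_⟩
  · exact (Nat.lt_pow_succ_log_self hK n).le.trans (Nat.pow_le_pow_right hK.le (by omega))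
  · rw [pow_add]
    exact Nat.mul_le_mul_left _ (Nat.pow_log_le_self K hn.ne')

lemma two_pow_le_rpow {a b : ℕ} {δ : ℝ} (h : (a : ℝ) ≤ b * δ) :
    (2 : ℝ) ^ a ≤ ((2 : ℝ) ^ b) ^ δ := by
  rw [← Real.rpow_natCast, ← Real.rpow_natCast, ← Real.rpow_mul zero_le_two]
  exact Real.rpow_le_rpow_of_exponent_le one_le_two h

lemma exponent_le {L T κ t : ℕ} {ε : ℝ} (ht : 0 < t) (htε : 1 / ε ≤ t) (hε : 0 < ε)
    (hκ : ((T : ℝ) + 3) / ε ≤ κ) :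
    ((L * (T + 3) + κ * (L / t) : ℕ) : ℝ) ≤ (κ * L : ℕ) * (2 * ε) := by
  rw [div_le_iff₀ hε] at htε hκ
  have quotient_le : ((L / t : ℕ) : ℝ) ≤ L * ε := by
    calc ((L / t : ℕ) : ℝ) ≤ L / t := Nat.cast_div_le
      _ ≤ L * ε := by
          rw [div_le_iff₀ (by exact_mod_cast ht), mul_assoc, mul_comm ε]
          exact le_mul_of_one_le_right (by positivity) htε
  push_cast
  calc (L : ℝ) * (T + 3) + κ * (L / t : ℕ) ≤ L * (κ * ε) + κ * (L * ε) := by gcongr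
    _ = κ * L * (2 * ε) := by ring

lemma le_mul_rpow_of_sq_le {e a w n ε : ℝ} (ha : 0 ≤ a) (hw : 0 ≤ w) (hn : 0 < n)
    (h : e ^ 2 ≤ a ^ 2 * (w * n) ^ (2 * ε) * n ^ 3) :
    e ≤ a * w ^ ε * n ^ ((3 : ℝ) / 2 + ε) := by
  have sq_rpow {y : ℝ} (hy : 0 ≤ y) (z : ℝ) : (y ^ z) ^ 2 = y ^ (2 * z) := by
    rw [← Real.rpow_natCast, ← Real.rpow_mul hy, mul_comm, Nat.cast_ofNat]
  refine le_of_sq_le_sq (h.trans_eq ?_) (by positivity)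
  have n_pow : n ^ (2 * ((3 : ℝ) / 2 + ε)) = n ^ (2 * ε) * n ^ 3 := by
    rw [← Real.rpow_natCast n 3, ← Real.rpow_add hn]
    congr 1
    push_cast
    ring
  rw [mul_pow, mul_pow, sq_rpow hw, sq_rpow hn.le, n_pow, Real.mul_rpow hw hn.le]
  ring

lemma ordEx_le_of_forall {n h : ℕ} {H : SimpleGraph (Fin h)} {b : ℝ} (hb : 0 ≤ b)
    (hG : ∀ G : SimpleGraph (Fin n), ¬ ordContains G H → (G.edgeSet.ncard : ℝ) ≤ b) :
    (ordEx n H : ℝ) ≤ b := by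
  refine (Nat.le_floor_iff hb).1 (csSup_le' ?_)
  rintro _ ⟨G, hGH, rfl⟩
  exact Nat.le_floor (hG G hGH)

end Asymptotics

lemma degree_le_two_of_iso_cycleGraph {V : Type*} [Fintype V] {H : SimpleGraph V}
    [DecidableRel H.Adj] {N : ℕ} (hN : 3 ≤ N) (φ : H ≃g SimpleGraph.cycleGraph N) (u : V) :
    H.degree u ≤ 2 := by
  obtain ⟨j, rfl⟩ := Nat.exists_eq_add_of_le' hN
  rw [← φ.degree_eq u]
  exact SimpleGraph.cycleGraph_degree_three_le.le

theorem statement3_general {h : ℕ} (H : SimpleGraph (Fin h)) [DecidableRel H.Adj] (x : ℕ)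
    (hbip : ∀ u v : Fin h, H.Adj u v → u < v → (u : ℕ) < x ∧ x ≤ (v : ℕ))
    (hdeg : ∀ u : Fin h, (u : ℕ) < x → H.degree u ≤ 2) (ε : ℝ) (hε : 0 < ε) :
    ∃ C : ℝ, 0 < C ∧ ∀ n : ℕ, 0 < n →
      (ordEx n H : ℝ) ≤ C * (n : ℝ) ^ ((3 : ℝ) / 2 + ε) := by
  obtain ⟨t, htε⟩ := exists_nat_ge (1 / ε)
  have ht : 0 < t := by exact_mod_cast (one_div_pos.2 hε).trans_le htε
  set T := 2 * (h + 2) * t with hT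
  obtain ⟨κ, hκε⟩ := exists_nat_ge (((T : ℝ) + 3) / ε)
  have hκ : 0 < κ := (Nat.cast_pos (α := ℝ)).1 (lt_of_lt_of_le (by positivity) hκε)
  set L₀ := 2 * t * ((h + 2) * 2 ^ T)
  set W : ℝ := ((2 : ℝ) ^ κ) ^ (L₀ + 1)
  refine ⟨3 * κ * W ^ ε, by positivity, fun n hn =>
    ordEx_le_of_forall (by positivity) fun G hG => ?_⟩
  obtain ⟨L, hL₀, hnL, hLn⟩ := exists_pow_mem_Icc (Nat.one_lt_two_pow hκ.ne') hn L₀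
  have pow_le : (2 : ℝ) ^ (κ * L) ≤ W * n := by
    simp only [W, pow_mul]
    exact_mod_cast hLn
  refine le_mul_rpow_of_sq_le (by positivity) (by positivity) (by exact_mod_cast hn) ?_
  calc (G.edgeSet.ncard : ℝ) ^ 2
      ≤ 8 * κ ^ 2 * 2 ^ (L * (T + 3) + κ * (L / t)) * n ^ 3 := by
        exact_mod_cast sq_ncard_edgeSet_le hG hbip hdeg hnL ht hT hL₀
    _ ≤ (3 * κ) ^ 2 * (W * n) ^ (2 * ε) * n ^ 3 := by
        have two_pow_le := (two_pow_le_rpow (exponent_le (L := L) ht htε hε hκε)).trans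
          (Real.rpow_le_rpow (by positivity) pow_le (by positivity))
        gcongr
        nlinarith [sq_nonneg (κ : ℝ)]

/-- Let `k ≥ 2` and let `H` be an ordered graph on `2k` vertices whose underlying graph is a
cycle of length `2k` and whose interval chromatic number is `2` (witnessed by a split point `x`:
all edges go between `{v : v < x}` and `{v : x ≤ v}`). Then `ex_<(n, H) ≤ C · n^(3/2 + ε)`. -/
theorem statement3 (k : ℕ) (hk : 2 ≤ k) (ε : ℝ) (hε : 0 < ε)
    (H : SimpleGraph (Fin (2 * k)))
    (hcyc : Nonempty (H ≃g SimpleGraph.cycleGraph (2 * k)))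
    (x : ℕ) (hx : x ≤ 2 * k)
    (hbip : ∀ u v : Fin (2 * k), H.Adj u v → u < v → (u : ℕ) < x ∧ x ≤ (v : ℕ)) :
    ∃ C : ℝ, 0 < C ∧ ∀ n : ℕ, 0 < n →
      (ordEx n H : ℝ) ≤ C * (n : ℝ) ^ ((3 : ℝ) / 2 + ε) := by
  classical
  obtain ⟨φ⟩ := hcyc
  exact statement3_general H x hbip
    (fun u _ => degree_le_two_of_iso_cycleGraph (by omega) φ u) ε hε
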